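/- arXiv:2203.09465 — 5 statements merged into one kernel-verified Lean document; each statement's English description precedes it below -/
import Mathlib

section
/- The infinite series ∑_{n=1}^{∞} 1/(n(2n−1)(4n−3)) converges to π/3. -/
/-! Partial fractions (with `n ≥ 1`) give the summand as `(8/3)/(4n-3) - 4/(4n-2) + (4/3)/(4n)`.
Splitting off `4/3` of the Leibniz pair `1/(4n-3) - 1/(4n-1)` leaves coefficients
`(4/3) * (1, -3, 1, 1)` on `1/(4n-3), 1/(4n-2), 1/(4n-1), 1/(4n)`, so the `N`-th partial sum is
`4/3` times the `2N`-th Leibniz partial sum plus `4/3 * (H_{4N} - 2 H_{2N} + H_N)`.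
The former tends to `π/3`. In the latter, writing `H_m = log m + γ + o(1)`, both the logarithms
and the constants `γ` cancel, so it tends to `0`. -/

open Real
open Filter Topology

lemma partial_sum_eq (N : ℕ) :
    ∑ n ∈ Finset.range N, 1 / (((n:ℝ)+1) * (2*((n:ℝ)+1)-1) * (4*((n:ℝ)+1)-3)) =
      4 / 3 * ∑ i ∈ Finset.range (2 * N), (-1 : ℝ) ^ i / (2 * i + 1) +
      4 / 3 * ((harmonic (4 * N) : ℝ) - 2 * harmonic (2 * N) + harmonic N) := by
  induction N with
  | zero => simp
  | succ N ih =>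
    rw [Finset.sum_range_succ, ih, show 2 * (N + 1) = 2 * N + 1 + 1 by ring,
      show 4 * (N + 1) = 4 * N + 1 + 1 + 1 + 1 by ring]
    simp only [Finset.sum_range_succ, harmonic_succ]
    have h0 : (-1 : ℝ) ^ (2 * N) = 1 := by simp
    have h1 : (-1 : ℝ) ^ (2 * N + 1) = -1 := by rw [pow_succ, h0]; ring
    rw [h0, h1]
    push_cast
    have key : ∀ x : ℝ, 0 ≤ x → 1 / ((x+1) * (2*(x+1)-1) * (4*(x+1)-3)) =
        4 / 3 * (1 / (2 * (2 * x) + 1) + -1 / (2 * (2 * x + 1) + 1)) +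
        4 / 3 * ((4 * x + 1)⁻¹ + (4 * x + 1 + 1)⁻¹ + (4 * x + 1 + 1 + 1)⁻¹ +
          (4 * x + 1 + 1 + 1 + 1)⁻¹ - 2 * ((2 * x + 1)⁻¹ + (2 * x + 1 + 1)⁻¹) + (x + 1)⁻¹) := by
      intro x hx
      rw [show 2 * (x+1) - 1 = 2 * x + 1 by ring, show 4 * (x+1) - 3 = 4 * x + 1 by ring,
        show 2 * (2 * x) + 1 = 4 * x + 1 by ring, show 2 * (2 * x + 1) + 1 = 4 * x + 3 by ring,
        show 4 * x + 1 + 1 + 1 + 1 = 4 * (x + 1) by ring,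
        show 4 * x + 1 + 1 + 1 = 4 * x + 3 by ring,
        show 4 * x + 1 + 1 = 2 * (2 * x + 1) by ring, show 2 * x + 1 + 1 = 2 * (x + 1) by ring]
      have : x + 1 ≠ 0 := by positivity
      have : 2 * x + 1 ≠ 0 := by positivity
      have : 4 * x + 1 ≠ 0 := by positivity
      have : 4 * x + 3 ≠ 0 := by positivity
      field_simp
      ring
    rw [key N N.cast_nonneg]
    ring

lemma tendsto_harmonic_combination :
    Tendsto (fun N : ℕ => (harmonic (4 * N) : ℝ) - 2 * harmonic (2 * N) + harmonic N)
      atTop (𝓝 0) := by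
  have h := Real.tendsto_harmonic_sub_log
  have m4 : Tendsto (fun N : ℕ => 4 * N) atTop atTop := tendsto_id.const_mul_atTop' (by norm_num)
  have m2 : Tendsto (fun N : ℕ => 2 * N) atTop atTop := tendsto_id.const_mul_atTop' (by norm_num)
  have H := ((h.comp m4).sub ((h.comp m2).const_mul 2)).add h
  rw [show Real.eulerMascheroniConstant - 2 * Real.eulerMascheroniConstant +
    Real.eulerMascheroniConstant = 0 by ring] at H
  refine H.congr' ?_
  filter_upwards [eventually_gt_atTop 0] with N hN
  have hN' : (N : ℝ) ≠ 0 := by positivity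
  simp only [Function.comp_apply]
  push_cast
  rw [Real.log_mul (by norm_num) hN', Real.log_mul (by norm_num) hN',
    show (4 : ℝ) = 2 ^ 2 by norm_num, Real.log_pow]
  push_cast
  ring

theorem stmt_0 :
    HasSum (fun n : ℕ => 1 / (((n:ℝ)+1) * (2*((n:ℝ)+1)-1) * (4*((n:ℝ)+1)-3))) (π / 3) := by
  rw [hasSum_iff_tendsto_nat_of_nonneg]
  · simp only [partial_sum_eq]
    have m2 : Tendsto (fun N : ℕ => 2 * N) atTop atTop := tendsto_id.const_mul_atTop' (by norm_num)
    have H := ((Real.tendsto_sum_pi_div_four.comp m2).const_mul (4 / 3)).add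
      (tendsto_harmonic_combination.const_mul (4 / 3))
    rw [show 4 / 3 * (π / 4) + 4 / 3 * 0 = π / 3 by ring] at H
    exact H
  · intro n
    rw [show 2 * ((n:ℝ)+1) - 1 = 2 * n + 1 by ring, show 4 * ((n:ℝ)+1) - 3 = 4 * n + 1 by ring]
    positivity
end

section
/- The infinite series ∑_{n=1}^{∞} 1/((2n−1)(4n−1)(4n−3)) converges to (ln 2)/2. -/
open Real

/-!
With `x = 4n - 2` the general term is `2 / ((x - 1) x (x + 1)) = 1/(x - 1) - 2/x + 1/(x + 1)`, so
the `N`-th partial sum is a combination of harmonic numbers, `H (4N) - 3/2 H (2N) + 1/2 H N`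
(`sum_range_eq_harmonic`). The coefficients sum to zero, so on substituting `H m = log m + γ + o(1)`
both `γ` and `log N` cancel, leaving `log 4 - 3/2 log 2 = log 2 / 2`. As all terms are
nonnegative, convergence of the partial sums gives `HasSum`.
-/

theorem sum_range_eq_harmonic (N : ℕ) :
    ∑ n ∈ Finset.range N,
      1 / ((2*((n:ℝ)+1)-1) * (4*((n:ℝ)+1)-1) * (4*((n:ℝ)+1)-3))
      = (harmonic (4 * N) : ℝ) - 3 / 2 * (harmonic (2 * N) : ℝ) + 1 / 2 * (harmonic N : ℝ) := by
  induction N with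
  | zero => simp
  | succ N ih =>
    rw [Finset.sum_range_succ, ih, show 4 * (N + 1) = 4 * N + 1 + 1 + 1 + 1 by ring,
      show 2 * (N + 1) = 2 * N + 1 + 1 by ring]
    simp only [harmonic_succ]
    push_cast
    have hN : (0 : ℝ) ≤ N := N.cast_nonneg
    -- Denominators written without subtraction are visibly nonzero, and factored ones cancel.
    rw [show 2 * ((N : ℝ) + 1) - 1 = 2 * N + 1 by ring,
      show 4 * ((N : ℝ) + 1) - 1 = 4 * N + 3 by ring,
      show 4 * ((N : ℝ) + 1) - 3 = 4 * N + 1 by ring,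
      show 4 * (N : ℝ) + 3 + 1 = 4 * (N + 1) by ring,
      show 4 * (N : ℝ) + 2 + 1 = 4 * N + 3 by ring,
      show 4 * (N : ℝ) + 1 + 1 = 2 * (2 * N + 1) by ring,
      show 2 * (N : ℝ) + 1 + 1 = 2 * (N + 1) by ring]
    have h1 : (N : ℝ) + 1 ≠ 0 := by positivity
    have h2 : 2 * (N : ℝ) + 1 ≠ 0 := by positivity
    have h3 : 4 * (N : ℝ) + 3 ≠ 0 := by positivity
    have h4 : 4 * (N : ℝ) + 1 ≠ 0 := by positivity
    field_simp
    ring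

theorem stmt_8 :
    HasSum (fun n : ℕ => 1 / ((2*((n:ℝ)+1)-1) * (4*((n:ℝ)+1)-1) * (4*((n:ℝ)+1)-3))) (Real.log 2 / 2) := by
  rw [hasSum_iff_tendsto_nat_of_nonneg]
  · simp only [sum_range_eq_harmonic]
    have h := tendsto_harmonic_sub_log
    have h4 := h.comp (Filter.tendsto_id.const_mul_atTop' (show 0 < 4 by norm_num))
    have h2 := h.comp (Filter.tendsto_id.const_mul_atTop' (show 0 < 2 by norm_num))
    have key := ((h4.sub (h2.const_mul (3 / 2))).add (h.const_mul (1 / 2))).add_const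
      (Real.log 2 / 2)
    rw [show eulerMascheroniConstant - 3 / 2 * eulerMascheroniConstant
      + 1 / 2 * eulerMascheroniConstant + Real.log 2 / 2 = Real.log 2 / 2 by ring] at key
    refine key.congr' ?_
    filter_upwards [Filter.eventually_gt_atTop 0] with N hN
    have hN' : (N : ℝ) ≠ 0 := by positivity
    have hlog4 : Real.log 4 = 2 * Real.log 2 := by
      rw [show (4 : ℝ) = 2 ^ 2 by norm_num, Real.log_pow]
      norm_num
    simp only [Function.comp_apply, id_eq, Nat.cast_mul, Nat.cast_ofNat]
    rw [Real.log_mul (by norm_num) hN', Real.log_mul (by norm_num) hN', hlog4]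
    ring
  · intro n
    have hn : (0 : ℝ) ≤ n := n.cast_nonneg
    have h1 : 0 ≤ 2 * ((n : ℝ) + 1) - 1 := by linarith
    have h2 : 0 ≤ 4 * ((n : ℝ) + 1) - 1 := by linarith
    have h3 : 0 ≤ 4 * ((n : ℝ) + 1) - 3 := by linarith
    positivity
end

section
/- The infinite series ∑_{n=1}^{∞} 1/(n²(2n−1)) converges to (24·ln 2 − π²)/6. -/
open Real

/-!
Partial fractions give `1 / (n²(2n-1)) = 4 (1/(2n-1) - 1/(2n)) - 1/n²`. The partial sums of
`1/(2n-1) - 1/(2n)` are `H_{2N} - H_N` (`sum_eq_harmonic_sub`), and since `H_N - log N` tends to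
Euler's constant, they tend to `log 2` (`hasSum_log_two`). The remaining part is `ζ(2) = π²/6`.
-/

lemma sum_eq_harmonic_sub (N : ℕ) :
    ∑ n ∈ Finset.range N, (1 / (2 * ((n : ℝ) + 1) - 1) - 1 / (2 * ((n : ℝ) + 1))) =
      (harmonic (2 * N) : ℝ) - (harmonic N : ℝ) := by
  induction N with
  | zero => simp
  | succ N ih =>
    have h1 : (2 * (N : ℝ) + 1) ≠ 0 := by positivity
    have h2 : ((N : ℝ) + 1) ≠ 0 := by positivity
    have h3 : (2 * ((N : ℝ) + 1) - 1) = 2 * (N : ℝ) + 1 := by ring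
    have h4 : (2 * (N : ℝ) + 1 + 1) = 2 * ((N : ℝ) + 1) := by ring
    rw [Finset.sum_range_succ, ih, show 2 * (N + 1) = 2 * N + 1 + 1 by ring,
      harmonic_succ, harmonic_succ, harmonic_succ]
    push_cast
    rw [h3, h4]
    field_simp
    ring

/-- The alternating harmonic series, with consecutive terms paired. -/
lemma hasSum_log_two :
    HasSum (fun n : ℕ => 1 / (2 * ((n : ℝ) + 1) - 1) - 1 / (2 * ((n : ℝ) + 1))) (Real.log 2) := by
  rw [hasSum_iff_tendsto_nat_of_nonneg]
  · simp_rw [sum_eq_harmonic_sub]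
    have h := Real.tendsto_harmonic_sub_log
    have h2 := h.comp (Filter.tendsto_id.const_mul_atTop' (show 0 < 2 by norm_num))
    have h3 := (h2.sub h).add_const (Real.log 2)
    rw [sub_self, zero_add] at h3
    refine h3.congr' ?_
    filter_upwards [Filter.eventually_gt_atTop 0] with N hN
    have hN' : (N : ℝ) ≠ 0 := by positivity
    simp only [Function.comp, id]
    push_cast
    rw [Real.log_mul two_ne_zero hN']
    ring
  · intro n
    have hn : (0 : ℝ) ≤ n := n.cast_nonneg
    exact sub_nonneg.2 (one_div_le_one_div_of_le (by linarith) (by linarith))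

theorem stmt_10 :
    HasSum (fun n : ℕ => 1 / (((n:ℝ)+1)^2 * (2*((n:ℝ)+1)-1))) ((24 * Real.log 2 - π^2) / 6) := by
  -- Shift `ζ(2)` to start at `n = 1`; its term at `n = 0` is the junk value `1 / 0 = 0`.
  have hz : HasSum (fun n : ℕ => 1 / ((n : ℝ) + 1) ^ 2) (π ^ 2 / 6) := by
    have := (hasSum_nat_add_iff' 1).2 hasSum_zeta_two
    simpa using this
  have hs : (24 * Real.log 2 - π^2) / 6 = 4 * Real.log 2 - π ^ 2 / 6 := by ring
  rw [hs]
  refine (congrArg (HasSum · _) (funext fun n => ?_)).mp ((hasSum_log_two.mul_left 4).sub hz)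
  have h1 : (2 * (n : ℝ) + 1) ≠ 0 := by positivity
  have h2 : ((n : ℝ) + 1) ≠ 0 := by positivity
  have h3 : (2 * ((n : ℝ) + 1) - 1) = 2 * (n : ℝ) + 1 := by ring
  rw [h3]
  field_simp
  ring
end

section
/- The infinite series ∑_{n=1}^{∞} 1/((2n+1)(2n−1)(4n+1)(4n−1)) converges to (π − 3)/6. -/
open Real

/-!
With `m = n + 1`, partial fractions in `4m²` give
`1 / ((4m² - 1)(16m² - 1)) = (1/3) * (1 / (4m² - 1) - 4 / (16m² - 1))`.
The first part telescopes, since `1 / (4m² - 1) = (1/2) * (1 / (2m - 1) - 1 / (2m + 1))`.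
The second part is `2 * (1 / (4m - 1) - 1 / (4m + 1))`, a pair of consecutive terms of the Leibniz
series for `π / 4`. The partial sums are thus an explicit combination of `1 / (2N + 1)` and Leibniz
partial sums, and the terms are nonnegative, so their limit gives the unconditional sum.
-/

/-- Partial sums of the series in terms of the Leibniz partial sums with `2N + 1` terms. -/
lemma partial_sum_eq_leibniz (N : ℕ) :
    ∑ n ∈ Finset.range N, 1 / ((2*((n:ℝ)+1)+1) * (2*((n:ℝ)+1)-1) * (4*((n:ℝ)+1)+1) *
        (4*((n:ℝ)+1)-1)) =
      (1 / 3) * ((1 / 2) * (1 - 1 / (((2 * N : ℕ) : ℝ) + 1)) +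
        2 * (∑ i ∈ Finset.range (2 * N + 1), (-1 : ℝ) ^ i / (2 * i + 1) - 1)) := by
  induction N with
  | zero => simp
  | succ k ih =>
    rw [Finset.sum_range_succ, ih, show 2 * (k + 1) + 1 = 2 * k + 1 + 1 + 1 by ring,
      Finset.sum_range_succ _ (2 * k + 1 + 1), Finset.sum_range_succ _ (2 * k + 1)]
    have hodd : (-1 : ℝ) ^ (2 * k + 1) = -1 := by simp [pow_succ, pow_mul]
    have heven : (-1 : ℝ) ^ (2 * k + 1 + 1) = 1 := by simp [pow_succ, pow_mul]
    rw [hodd, heven]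
    push_cast
    have hk : (0 : ℝ) ≤ k := k.cast_nonneg
    have h1 : (2 * ((k:ℝ) + 1) + 1) ≠ 0 := by positivity
    have h2 : (2 * (k:ℝ) + 1) ≠ 0 := by positivity
    have h3 : (4 * (k:ℝ) + 5) ≠ 0 := by positivity
    have h4 : (4 * (k:ℝ) + 3) ≠ 0 := by positivity
    rw [show 2 * ((k:ℝ) + 1) - 1 = 2 * k + 1 by ring, show 4 * ((k:ℝ) + 1) + 1 = 4 * k + 5 by ring,
      show 4 * ((k:ℝ) + 1) - 1 = 4 * k + 3 by ring,
      show 2 * (2 * (k:ℝ) + 1 + 1) + 1 = 4 * k + 5 by ring,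
      show 2 * (2 * (k:ℝ) + 1) + 1 = 4 * k + 3 by ring]
    generalize ∑ i ∈ Finset.range (2 * k + 1), (-1 : ℝ) ^ i / (2 * i + 1) = S
    field_simp
    ring

theorem stmt_15 :
    HasSum (fun n : ℕ => 1 / ((2*((n:ℝ)+1)+1) * (2*((n:ℝ)+1)-1) * (4*((n:ℝ)+1)+1) * (4*((n:ℝ)+1)-1))) ((π - 3) / 6) := by
  rw [hasSum_iff_tendsto_nat_of_nonneg]
  · simp_rw [partial_sum_eq_leibniz]
    have hdouble : Filter.Tendsto (fun N : ℕ => 2 * N) Filter.atTop Filter.atTop :=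
      Filter.tendsto_id.const_mul_atTop' (by norm_num)
    have hinv := (tendsto_one_div_add_atTop_nhds_zero_nat (𝕜 := ℝ)).comp hdouble
    have hleib := Real.tendsto_sum_pi_div_four.comp
      ((Filter.tendsto_add_atTop_nat 1).comp hdouble)
    have hlim := (((hinv.const_sub 1).const_mul (1 / 2)).add
      ((hleib.sub_const 1).const_mul 2)).const_mul (1 / 3)
    rw [show (π - 3) / 6 = 1 / 3 * (1 / 2 * (1 - 0) + 2 * (π / 4 - 1)) by ring]
    exact hlim
  · intro n
    have hn : (0 : ℝ) ≤ n := n.cast_nonneg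
    have h1 : 0 ≤ 2 * ((n:ℝ) + 1) - 1 := by linarith
    have h2 : 0 ≤ 4 * ((n:ℝ) + 1) - 1 := by linarith
    positivity
end

section
/- The infinite series ∑_{n=1}^{∞} 1/((4n+1)(4n−1)(8n+1)(8n−1)) converges to (π(1 + 2√2) − 12)/24. -/
/-!
With `m = n + 1`, partial fractions in `m ^ 2` give
`1 / ((16 m² - 1) (64 m² - 1)) = (1 / 3) / (16 m² - 1) - (4 / 3) / (64 m² - 1)`.
Both resulting series are instances, at `x = 1 / 4` and `x = 1 / 8`, of the Mittag-Leffler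
expansion `π cot (π x) - 1 / x = ∑ (1 / (x - m) + 1 / (x + m))`. The values
`cot (π / 4) = 1` and `cot (π / 8) = 1 + √2` then yield the sum.
-/

open Real

/-- The Mittag-Leffler expansion of the cotangent on the real interval `(0, 1)`. -/
lemma hasSum_cot_real (x : ℝ) (h0 : 0 < x) (h1 : x < 1) :
    HasSum (fun n : ℕ => 1 / (x - ((n : ℝ) + 1)) + 1 / (x + ((n : ℝ) + 1)))
      (π * Real.cot (π * x) - 1 / x) := by
  have hz : (x : ℂ) ∈ Complex.integerComplement := by
    rintro ⟨k, hk⟩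
    have hk' : (k : ℝ) = x := by exact_mod_cast hk
    rw [← hk'] at h0 h1
    have h0' : 0 < k := by exact_mod_cast h0
    have h1' : k < 1 := by exact_mod_cast h1
    omega
  have h := (summable_cotTerm hz).hasSum
  rw [show (∑' n, cotTerm (x : ℂ) n) = π * Complex.cot (π * x) - 1 / x from
    (cot_series_rep' hz).symm] at h
  rw [← Complex.hasSum_ofReal]
  convert h using 1
  · funext n
    simp [cotTerm]
  · push_cast
    rfl

lemma cot_pi_div_eight : Real.cot (π * (1 / 8)) = 1 + √2 := by
  have hs : Real.sin (π * (1 / 8)) ≠ 0 :=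
    (Real.sin_pos_of_pos_of_lt_pi (by positivity) (by nlinarith [Real.pi_pos])).ne'
  have h2 : π / 4 = 2 * (π * (1 / 8)) := by ring
  have hsin := Real.sin_pi_div_four
  have hcos := Real.cos_pi_div_four
  rw [h2, Real.sin_two_mul] at hsin
  rw [h2, Real.cos_two_mul'] at hcos
  have hsq : √2 * √2 = 2 := Real.mul_self_sqrt (by norm_num)
  have hone := Real.sin_sq_add_cos_sq (π * (1 / 8))
  rw [Real.cot_eq_cos_div_sin, div_eq_iff hs]
  apply mul_left_cancel₀ hs
  -- Half-angle relation: `sin θ cos θ = √2 / 4` and `sin² θ = (2 - √2) / 4`.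
  have hsin2 : Real.sin (π * (1 / 8)) ^ 2 = (2 - √2) / 4 := by linarith
  linear_combination hsin / 2 - (1 + √2) * hsin2 + hsq / 4

theorem stmt_16 :
    HasSum (fun n : ℕ => 1 / ((4*((n:ℝ)+1)+1) * (4*((n:ℝ)+1)-1) * (8*((n:ℝ)+1)+1) * (8*((n:ℝ)+1)-1))) ((π * (1 + 2 * Real.sqrt 2) - 12) / 24) := by
  have h4 := hasSum_cot_real (1 / 4) (by norm_num) (by norm_num)
  have h8 := hasSum_cot_real (1 / 8) (by norm_num) (by norm_num)
  have c4 : Real.cot (π * (1 / 4)) = 1 := by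
    rw [Real.cot_eq_cos_div_sin, mul_one_div, Real.cos_pi_div_four, Real.sin_pi_div_four]
    exact div_self (by positivity)
  rw [c4] at h4
  rw [cot_pi_div_eight] at h8
  -- For `x = 1 / a` one has `1 / (a² m² - 1) = -(x / 2) (1 / (x - m) + 1 / (x + m))`, so the
  -- partial-fraction coefficients `1 / 3` and `-4 / 3` become `-1 / 24` and `1 / 12`.
  convert (h4.mul_left (-1 / 24)).add (h8.mul_left (1 / 12)) using 1
  · rfl
  · funext n
    have hn : (0 : ℝ) ≤ n := n.cast_nonneg
    have a1 : 4 * ((n : ℝ) + 1) + 1 ≠ 0 := by positivity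
    have a2 : 4 * ((n : ℝ) + 1) - 1 ≠ 0 := by linarith
    have a3 : 8 * ((n : ℝ) + 1) + 1 ≠ 0 := by positivity
    have a4 : 8 * ((n : ℝ) + 1) - 1 ≠ 0 := by linarith
    have b1 : 1 / (1 / 4 + ((n : ℝ) + 1)) = 4 / (4 * ((n : ℝ) + 1) + 1) := by
      rw [div_eq_div_iff (by positivity) a1]; ring
    have b2 : 1 / (1 / 4 - ((n : ℝ) + 1)) = -4 / (4 * ((n : ℝ) + 1) - 1) := by
      rw [div_eq_div_iff (by linarith) a2]; ring
    have b3 : 1 / (1 / 8 + ((n : ℝ) + 1)) = 8 / (8 * ((n : ℝ) + 1) + 1) := by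
      rw [div_eq_div_iff (by positivity) a3]; ring
    have b4 : 1 / (1 / 8 - ((n : ℝ) + 1)) = -8 / (8 * ((n : ℝ) + 1) - 1) := by
      rw [div_eq_div_iff (by linarith) a4]; ring
    rw [b1, b2, b3, b4]
    generalize (n : ℝ) + 1 = m at *
    rw [div_add_div _ _ a2 a1, div_add_div _ _ a4 a3, mul_div_assoc', mul_div_assoc',
      div_add_div _ _ (mul_ne_zero a2 a1) (mul_ne_zero a4 a3),
      div_eq_div_iff (by simp [a1, a2, a3, a4]) (by simp [a1, a2, a3, a4])]
    ring
  · ring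
end
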